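/- arXiv:2401.05247 — 5 statements merged into one kernel-verified Lean document; each statement's English description precedes it below -/
import Mathlib

section
/- Let R be a commutative ring and let A = (a_{r,s})_{1≤r,s≤n} be an n×n matrix over R such that a_{h,h-1} = 1 for all 2 ≤ h ≤ n and a_{h,k} = 0 whenever k < h-1. Then det A = ∑_{σ ∈ Ŝ_n} sgn(σ) · ∏_{h ∈ J_σ} a_{h,σ(h)}. -/
/-- Let `R` be a commutative ring and `A` an `n × n` matrix over `R`
(0-indexed on `Fin n`) such that `A h k = 1` whenever `k + 1 = h` (the subdiagonal is `1`)
and `A h k = 0` whenever `k + 1 < h` (zeros below the subdiagonal).  Then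
`det A = ∑_{σ ∈ Ŝ_n} sgn(σ) ∏_{h ∈ J_σ} A h (σ h)`, where
`Ŝ_n = {σ : h ≤ σ h + 1 for all h}` and `J_σ = {h : h ≤ σ h}`. -/
theorem stmt0 {R : Type*} [CommRing R] (n : ℕ) (A : Matrix (Fin n) (Fin n) R)
    (hsub : ∀ h k : Fin n, (k : ℕ) + 1 = (h : ℕ) → A h k = 1)
    (hzero : ∀ h k : Fin n, (k : ℕ) + 1 < (h : ℕ) → A h k = 0) :
    A.det = ∑ σ ∈ Finset.univ.filter
        (fun σ : Equiv.Perm (Fin n) => ∀ h : Fin n, (h : ℕ) ≤ (σ h : ℕ) + 1),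
      ((Equiv.Perm.sign σ : ℤ) : R) *
        ∏ h ∈ Finset.univ.filter (fun h : Fin n => (h : ℕ) ≤ (σ h : ℕ)), A h (σ h) := by
  -- The Leibniz formula for the transpose indexes the factors by rows, as in the claim.
  rw [← Matrix.det_transpose, Matrix.det_apply']
  simp only [Matrix.transpose_apply]
  -- A permutation outside `Ŝ_n` picks an entry below the subdiagonal, so its term vanishes.
  rw [← Finset.sum_filter_of_ne
    (p := fun σ : Equiv.Perm (Fin n) => ∀ h : Fin n, (h : ℕ) ≤ (σ h : ℕ) + 1)]
  · refine Finset.sum_congr rfl fun σ hσ => ?_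
    rw [Finset.mem_filter] at hσ
    congr 1
    -- For `σ ∈ Ŝ_n`, a row outside `J_σ` contributes a subdiagonal entry, which is `1`.
    refine (Finset.prod_filter_of_ne fun h _ hne => ?_).symm
    by_contra hlt
    exact hne (hsub h (σ h) (by have := hσ.2 h; omega))
  · intro σ _ hne h
    by_contra hlt
    refine hne ?_
    rw [Finset.prod_eq_zero (Finset.mem_univ h) (hzero h (σ h) (by omega)), mul_zero]
end

section
/- Let R be a commutative ring and let A = (a_{r,s})_{1≤r,s≤n} be an n×n matrix over R such that a_{h,h-1} = 1 for all 2 ≤ h ≤ n and a_{h,k} = 0 whenever k < h-1. Then det A = ∑_{k=1}^{n} (-1)^{k-1} a_{1,k} O_{n-k}^{k+1}, where O_j^i is the i-th minor of the diagonal of A of order j. -/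
/-!
Expand the determinant along the first row. Deleting the first row and column `k` from `A` leaves a
block upper triangular matrix: its leading `k × k` block is upper triangular with the subdiagonal
of `A`, i.e. `1`s, on the diagonal, the block below it vanishes, and the trailing block is the
submatrix of `A` on the rows and columns after `k` (`det_eq_det_trailing`). Hence the cofactor is
exactly the diagonal minor starting at `k + 1`.
-/

/-- The `i`-th minor of the diagonal of `A` of order `j` (here `i` is the 0-indexed starting
row/column): the determinant of the `j × j` submatrix of `A` formed by rows and columns
`i, i+1, …, i+j-1`.  For `j = 0` it equals `1` (determinant of the empty matrix). -/
def diagMinor {R : Type*} [CommRing R] {n : ℕ} (A : Matrix (Fin n) (Fin n) R)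
    (i j : ℕ) (hij : i + j ≤ n) : R :=
  (A.submatrix (fun r : Fin j => (⟨i + (r : ℕ), by have := r.isLt; omega⟩ : Fin n))
               (fun c : Fin j => (⟨i + (c : ℕ), by have := c.isLt; omega⟩ : Fin n))).det

/-- The determinant of a block upper triangular matrix whose leading block is upper unitriangular
is the determinant of its trailing block. -/
theorem det_eq_det_trailing {R : Type*} [CommRing R] {k d : ℕ}
    (M : Matrix (Fin (k + d)) (Fin (k + d)) R)
    (hdiag : ∀ i : Fin k, M (Fin.castAdd d i) (Fin.castAdd d i) = 1)
    (hlow : ∀ (i : Fin (k + d)) (j : Fin k), (j : ℕ) < i → M i (Fin.castAdd d j) = 0) :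
    M.det = (M.submatrix (Fin.natAdd k) (Fin.natAdd k)).det := by
  rw [← Matrix.det_submatrix_equiv_self finSumFinEquiv M,
    ← Matrix.fromBlocks_toBlocks (M.submatrix finSumFinEquiv finSumFinEquiv)]
  have h21 : (M.submatrix finSumFinEquiv finSumFinEquiv).toBlocks₂₁ = 0 := by
    ext i j
    simp only [Matrix.toBlocks₂₁, Matrix.of_apply, Matrix.submatrix_apply,
      finSumFinEquiv_apply_left, finSumFinEquiv_apply_right, Matrix.zero_apply]
    exact hlow _ _ (by simp only [Fin.val_natAdd]; omega)
  have h11 : (M.submatrix finSumFinEquiv finSumFinEquiv).toBlocks₁₁.det = 1 := by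
    rw [Matrix.det_of_isUpperTriangular]
    · exact Finset.prod_eq_one fun i _ => by simpa [Matrix.toBlocks₁₁] using hdiag i
    · intro i j hij
      have hlt : (j : ℕ) < i := hij
      simpa [Matrix.toBlocks₁₁] using hlow (Fin.castAdd d i) j (by simpa using hlt)
  rw [h21, Matrix.det_fromBlocks_zero₂₁, h11, one_mul]
  congr 1

/-- Let `R` be a commutative ring and `A` an `n × n` matrix over `R`
(0-indexed on `Fin n`) with `1`s on the subdiagonal and `0`s below it.  Then
`det A = ∑_{k=1}^{n} (-1)^{k-1} a_{1,k} O_{n-k}^{k+1}`  (1-indexed; below `k : Fin n` is the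
0-indexed version of the summation index, `A ⟨0,_⟩ k` is `a_{1,k}`, and
`diagMinor A (k+1) (n-(k+1))` is the minor `O_{n-k}^{k+1}`). -/
theorem stmt1 {R : Type*} [CommRing R] {n : ℕ} (hn : 0 < n)
    (A : Matrix (Fin n) (Fin n) R)
    (hsub : ∀ h k : Fin n, (k : ℕ) + 1 = (h : ℕ) → A h k = 1)
    (hzero : ∀ h k : Fin n, (k : ℕ) + 1 < (h : ℕ) → A h k = 0) :
    A.det = ∑ k : Fin n,
      (-1 : R) ^ (k : ℕ) * A ⟨0, hn⟩ k *
        diagMinor A ((k : ℕ) + 1) (n - ((k : ℕ) + 1)) (by have := k.isLt; omega) := by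
  obtain ⟨m, rfl⟩ : ∃ m, n = m + 1 := ⟨n - 1, by omega⟩
  rw [Matrix.det_succ_row_zero]
  refine Finset.sum_congr rfl fun k _ => ?_
  congr 1
  obtain ⟨k, hk⟩ := k
  obtain ⟨d, rfl⟩ : ∃ d, m = k + d := ⟨m - k, by omega⟩
  -- The order of the minor is `d`; it is generalized because it occurs in the type of the minor.
  have key : ∀ (e : ℕ) (he : k + 1 + e ≤ k + d + 1), e = d →
      (A.submatrix Fin.succ (Fin.succAbove ⟨k, hk⟩)).det = diagMinor A (k + 1) e he := by
    rintro e he rfl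
    rw [det_eq_det_trailing, diagMinor, Matrix.submatrix_submatrix]
    · congr 2
      · ext i
        simp only [Function.comp_apply, Fin.val_succ, Fin.val_natAdd]
        omega
      · ext i
        rw [Function.comp_apply, Fin.succAbove_of_le_castSucc _ _ (by simp [Fin.le_def])]
        simp only [Fin.val_succ, Fin.val_natAdd]
        omega
    · intro i
      rw [Matrix.submatrix_apply, Fin.succAbove_of_castSucc_lt _ _ (by simp [Fin.lt_def])]
      exact hsub _ _ (by simp)
    · intro i j hij
      rw [Matrix.submatrix_apply, Fin.succAbove_of_castSucc_lt _ _ (by simp [Fin.lt_def])]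
      exact hzero _ _ (by simpa using hij)
  exact key _ _ (by simp only; omega)
end

section
/- Let σ ∈ Ŝ_n and let h ∈ J_σ be an element that is not the maximum of J_σ. Then σ(h) + 1 ∈ J_σ. -/
/-!
If `x ∈ J_σ` and `σ x` is not the last point, then `σ x + 1 ∈ J_σ`: otherwise
`σ (σ x + 1) = σ x`, so `σ x + 1 = x` by injectivity, against `x ≤ σ x`
(`succ_mem_of_lt`). In particular the maximum of `J_σ` is sent to the last point, since
`σ x + 1` would be a larger element of `J_σ`. As `σ` is injective, no other element of `J_σ`
is sent to the last point, so the first observation applies to it.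
-/

theorem succ_mem_of_lt {n : ℕ} (σ : Equiv.Perm (Fin n))
    (hσ : ∀ h : Fin n, (h : ℕ) ≤ (σ h : ℕ) + 1)
    (x : Fin n) (hx : (x : ℕ) ≤ (σ x : ℕ)) (hlt : (σ x : ℕ) + 1 < n) :
    ∃ g : Fin n, (g : ℕ) = (σ x : ℕ) + 1 ∧ (g : ℕ) ≤ (σ g : ℕ) := by
  refine ⟨⟨(σ x : ℕ) + 1, hlt⟩, rfl, ?_⟩
  by_contra hcon
  have hge := hσ ⟨(σ x : ℕ) + 1, hlt⟩
  have heq : σ ⟨(σ x : ℕ) + 1, hlt⟩ = σ x := by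
    apply Fin.ext
    simp only at hcon hge
    omega
  have hval := congrArg Fin.val (σ.injective heq)
  simp only at hval
  omega

/-- Let `σ ∈ Ŝ_n` (0-indexed on `Fin n`: `h ≤ σ h + 1` for all `h`), and let
`h ∈ J_σ` (i.e. `h ≤ σ h`) be an element which is not the maximum of `J_σ` (i.e. there is
`h' ∈ J_σ` with `h < h'`).  Then `σ(h) + 1 ∈ J_σ`. -/
theorem stmt7 (n : ℕ) (σ : Equiv.Perm (Fin n))
    (hσ : ∀ h : Fin n, (h : ℕ) ≤ (σ h : ℕ) + 1)
    (h : Fin n) (hmem : (h : ℕ) ≤ (σ h : ℕ))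
    (hnotmax : ∃ h' : Fin n, (h' : ℕ) ≤ (σ h' : ℕ) ∧ (h : ℕ) < (h' : ℕ)) :
    ∃ g : Fin n, (g : ℕ) = (σ h : ℕ) + 1 ∧ (g : ℕ) ≤ (σ g : ℕ) := by
  obtain ⟨h', hmem', hlt⟩ := hnotmax
  apply succ_mem_of_lt σ hσ h hmem
  by_contra hlast
  obtain ⟨M, hM, hmax⟩ := Finset.exists_max_image
    (Finset.univ.filter fun x : Fin n => (x : ℕ) ≤ (σ x : ℕ)) (fun x => (x : ℕ))
    ⟨h', by simpa using hmem'⟩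
  simp only [Finset.mem_filter, Finset.mem_univ, true_and] at hM hmax
  have hM' := hmax h' hmem'
  have hσM : ¬ (σ M : ℕ) + 1 < n := by
    intro hMlt
    obtain ⟨g, hg, hgmem⟩ := succ_mem_of_lt σ hσ M hM hMlt
    have := hmax g hgmem
    omega
  have heq : σ M = σ h := by
    apply Fin.ext
    have := (σ M).isLt
    have := (σ h).isLt
    omega
  have := congrArg Fin.val (σ.injective heq)
  omega
end

section
/- Let p be a prime, s ≥ 1, let t_1,...,t_s, n be nonnegative integers with t = t_1+...+t_s ≤ n, and for 1 ≤ i ≤ s and i+1 ≤ j ≤ s+1 let A_{i,j} be a t_i × t_j matrix over ℤ_{p^s} (where t_{s+1} = n-t). Let C be the ℤ_{p^s}-additive code of length n generated by the rows of the generator matrix G in standard form. For 1 ≤ j ≤ s, define matrices H_{i,j} recursively (in decreasing i) by H_{s+1-j,j} = -A_{s+1-j,s+2-j} and, for 1 ≤ i < s+1-j, H_{i,j} = -(A_{i,s-j+2} + ∑_{k=i+1}^{s-j+1} A_{i,k} H_{k,j}). Let H be the matrix whose transpose H^T has: in the first column block (of width n-t) the blocks H_{1,1}, ..., H_{s,1},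 Id_{n-t} stacked vertically; and in column block j (of width t_{s+2-j}, for 2 ≤ j ≤ s) the blocks p^{j-1}H_{1,j}, ..., p^{j-1}H_{s+1-j,j}, followed by p^{j-1}Id_{t_{s+2-j}}, followed by zero blocks. Then H is a parity-check matrix of C; that is, the rows of H generate the dual code C^⊥. -/
/-!
The dual code is compared with the row span of `H` block by block.

*Rows of `H` are orthogonal to rows of `G`* (`gen_dot_parity`).  The block row `i` of `G` and the
block row `j` of `H` carry the scalars `p^(i-1)` and `p^(j-1)`.  If `i ≤ s+1-j`, the inner product
vanishes by the recursion defining `H_{i,j}` (`Hrec_add_eq_zero`); otherwise the product of the two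
scalars is a multiple of `p^s = 0`.

*Every dual vector is a combination of rows of `H`* (`mem_span_of_dual`).  Let `v` be dual, with all
its blocks beyond the `m`-th equal to zero.  Pairing `v` with the `m`-th block row of `G` gives
`p^(m-1) v_m = 0`, so `v_m` is divisible by `p^(s+1-m)`; in particular `v_m = 0` when `m = 1`.
For `m ≥ 2` the block row `j = s+2-m` of `H` ends in
`p^(s+1-m) Id` at block `m`, so subtracting a combination of its rows kills `v_m`, keeps `v` dual,
and leaves a vector with one block fewer.
-/

/-- The matrices `H_{i,j}` of Theorem 2 (iterative construction), defined by descending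
recursion on `i`:  `H_{s+1-j,j} = -A_{s+1-j,s+2-j}` and, for `i < s+1-j`,
`H_{i,j} = -(A_{i,s-j+2} + ∑_{k=i+1}^{s-j+1} A_{i,k} H_{k,j})`.
(For `i = s+1-j` the sum below is empty, giving the base case.) -/
def Hrec (s : ℕ) (t : ℕ → ℕ) {R : Type*} [CommRing R]
    (A : (a b : ℕ) → Matrix (Fin (t a)) (Fin (t b)) R) (j : ℕ) (i : ℕ) :
    Matrix (Fin (t i)) (Fin (t (s + 2 - j))) R :=
  -(A i (s + 2 - j) +
      ∑ k ∈ (Finset.Icc (i + 1) (s + 1 - j)).attach,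
        A i (k : ℕ) * Hrec s t A j (k : ℕ))
  termination_by s + 2 - i
  decreasing_by
    have := Finset.mem_Icc.mp k.2
    omega

/-- The generator matrix `G` in standard form of a `ℤ_{p^s}`-additive code of type
`(n; t_1, …, t_s)`.  Rows are indexed by pairs (block row `i : Fin s`, row inside block);
columns are indexed by pairs (block column `k : Fin (s+1)`, column inside block), the
column blocks having widths `t_1, …, t_s, t_{s+1} = n - t`.  Its `i`-th (1-indexed) block
row is `(0, …, 0, p^{i-1} Id_{t_i}, p^{i-1} A_{i,i+1}, …, p^{i-1} A_{i,s+1})`. -/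
def stdGen (p s : ℕ) (t : ℕ → ℕ) {R : Type*} [CommRing R]
    (A : (a b : ℕ) → Matrix (Fin (t a)) (Fin (t b)) R) :
    Matrix ((i : Fin s) × Fin (t ((i : ℕ) + 1)))
      ((k : Fin (s + 1)) × Fin (t ((k : ℕ) + 1))) R :=
  Matrix.of fun x y =>
    if (x.1 : ℕ) = (y.1 : ℕ) then
      (if (x.2 : ℕ) = (y.2 : ℕ) then (p : R) ^ (x.1 : ℕ) else 0)
    else if (x.1 : ℕ) < (y.1 : ℕ) then
      (p : R) ^ (x.1 : ℕ) * A ((x.1 : ℕ) + 1) ((y.1 : ℕ) + 1) x.2 y.2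
    else 0

/-- The parity-check matrix `H` of Theorem 2 (iterative construction).  Rows of `H` are
the columns of `Hᵀ`, indexed by pairs (block `j : Fin s`, row inside block), the `j`-th
block (1-indexed `j`) having `t_{s+2-j}` rows (for `j = 1` this is `t_{s+1} = n - t`).
The `j`-th block column of `Hᵀ` consists, vertically, of the blocks `p^{j-1} H_{i,j}` for
`i = 1, …, s+1-j`, followed by `p^{j-1} Id_{t_{s+2-j}}`, followed by zero blocks, where
the `H_{i,j}` are given by the recursion `Hrec`. -/
def parityHrec (p s : ℕ) (t : ℕ → ℕ) {R : Type*} [CommRing R]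
    (A : (a b : ℕ) → Matrix (Fin (t a)) (Fin (t b)) R) :
    Matrix ((j : Fin s) × Fin (t (s + 2 - ((j : ℕ) + 1))))
      ((k : Fin (s + 1)) × Fin (t ((k : ℕ) + 1))) R :=
  Matrix.of fun x y =>
    if ((y.1 : ℕ) + 1) + ((x.1 : ℕ) + 1) ≤ s + 1 then
      (p : R) ^ (x.1 : ℕ) * Hrec s t A ((x.1 : ℕ) + 1) ((y.1 : ℕ) + 1) y.2 x.2
    else if ((y.1 : ℕ) + 1) = s + 2 - ((x.1 : ℕ) + 1) then
      (if (x.2 : ℕ) = (y.2 : ℕ) then (p : R) ^ (x.1 : ℕ) else 0)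
    else 0

theorem Hrec_add_eq_zero (s : ℕ) (t : ℕ → ℕ) {R : Type*} [CommRing R]
    (A : (a b : ℕ) → Matrix (Fin (t a)) (Fin (t b)) R) (j i : ℕ) :
    Hrec s t A j i + (∑ k ∈ Finset.Icc (i + 1) (s + 1 - j), A i k * Hrec s t A j k)
      + A i (s + 2 - j) = 0 := by
  rw [Hrec, Finset.sum_attach (Finset.Icc (i + 1) (s + 1 - j))
    (fun k => A i k * Hrec s t A j k)]
  abel

/-- Multiplication by an identity block whose index types are `Fin (t m)` and `Fin (t m')` with
`m = m'` only propositionally; equality of indices is therefore tested on values. -/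
theorem sum_mul_ite_val {R : Type*} [CommRing R] (t : ℕ → ℕ) {m m' : ℕ} (h : m = m')
    (f : (k : ℕ) → Fin (t k) → R) (b : Fin (t m')) (q : R) :
    ∑ c : Fin (t m), f m c * (if (b : ℕ) = (c : ℕ) then q else 0) = f m' b * q := by
  subst h
  simp [← Fin.ext_iff]

theorem gen_dot_parity (p s : ℕ) (t : ℕ → ℕ) {R : Type*} [CommRing R]
    (hR : (p : R) ^ s = 0)
    (A : (a b : ℕ) → Matrix (Fin (t a)) (Fin (t b)) R)
    (x : (i : Fin s) × Fin (t ((i : ℕ) + 1)))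
    (z : (j : Fin s) × Fin (t (s + 2 - ((j : ℕ) + 1)))) :
    ∑ y, stdGen p s t A x y * parityHrec p s t A z y = 0 := by
  obtain ⟨⟨i, hi⟩, a⟩ := x
  obtain ⟨⟨j, hj⟩, b⟩ := z
  simp only at a b
  rw [Fintype.sum_sigma]
  by_cases hij : i + j < s
  · -- The contribution of column block `k`, written as a sum of three indicator terms: the identity
    -- block of `G`, the blocks where both factors are generic, and the identity block of `H`.
    obtain ⟨F, hF⟩ : ∃ F : ℕ → R, ∀ l, F l = (p : R) ^ (i + j) *
          ((if i + 1 = l then Hrec s t A (j + 1) (i + 1) a b else 0) +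
          (if l ∈ Finset.Icc (i + 1 + 1) (s + 1 - (j + 1)) then
            (A (i + 1) l * Hrec s t A (j + 1) l) a b else 0) +
          (if s + 2 - (j + 1) = l then A (i + 1) (s + 2 - (j + 1)) a b else 0)) :=
      ⟨_, fun _ => rfl⟩
    have key : ∀ k : Fin (s + 1),
        ∑ c : Fin (t ((k : ℕ) + 1)), stdGen p s t A ⟨⟨i, hi⟩, a⟩ ⟨k, c⟩ *
          parityHrec p s t A ⟨⟨j, hj⟩, b⟩ ⟨k, c⟩ =
        F ((k : ℕ) + 1) := by
      rintro ⟨k, hk⟩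
      simp only [hF, stdGen, parityHrec, Matrix.of_apply, Finset.mem_Icc]
      rcases lt_trichotomy i k with h | h | h
      · rcases lt_trichotomy (k + j) s with h' | h' | h'
        · rw [if_neg (by omega), if_pos (by omega), if_neg (by omega)]
          simp only [if_neg h.ne, if_pos h, if_pos (show k + 1 + (j + 1) ≤ s + 1 by omega),
            Matrix.mul_apply, zero_add, add_zero, Finset.mul_sum]
          exact Finset.sum_congr rfl fun c _ => by ring
        · rw [if_neg (by omega), if_neg (by omega), if_pos (by omega)]
          simp only [if_neg h.ne, if_pos h, if_neg (show ¬ k + 1 + (j + 1) ≤ s + 1 by omega),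
            if_pos (show k + 1 = s + 2 - (j + 1) by omega)]
          rw [sum_mul_ite_val t (show k + 1 = s + 2 - (j + 1) by omega)
            (fun l c => (p : R) ^ i * A (i + 1) l a c)]
          ring
        · rw [if_neg (by omega), if_neg (by omega), if_neg (by omega)]
          simp only [if_neg (show ¬ k + 1 + (j + 1) ≤ s + 1 by omega),
            if_neg (show ¬ k + 1 = s + 2 - (j + 1) by omega)]
          simp
      · subst h
        rw [if_pos rfl, if_neg (by omega), if_neg (by omega)]
        simp only [if_true, if_pos (show i + 1 + (j + 1) ≤ s + 1 by omega), ← Fin.ext_iff]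
        simp [pow_add, mul_assoc]
      · rw [if_neg (by omega), if_neg (by omega), if_neg (by omega)]
        simp only [if_neg h.ne', if_neg h.le.not_gt]
        simp
    rw [Finset.sum_congr rfl fun k _ => key k]
    rw [Fin.sum_univ_eq_sum_range (fun k => F (k + 1)) (s + 1),
      Finset.range_eq_Ico, Finset.sum_Ico_add' F 0 (s + 1) 1]
    simp only [hF]
    rw [← Finset.mul_sum,
      Finset.sum_add_distrib, Finset.sum_add_distrib, Finset.sum_ite_eq, Finset.sum_ite_eq,
      Finset.sum_ite_mem, if_pos (by simp; omega), if_pos (by simp; omega),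
      Finset.inter_eq_right.mpr (by intro l; simp only [Finset.mem_Icc, Finset.mem_Ico]; omega)]
    have := congrFun (congrFun (Hrec_add_eq_zero s t A (j + 1) (i + 1)) a) b
    simp only [Matrix.add_apply, Matrix.sum_apply, Matrix.zero_apply] at this
    rw [this, mul_zero]
  · -- Each product of entries is a multiple of `p^i * p^j`, which is `0`.
    have h0 : (p : R) ^ i * (p : R) ^ j = 0 := by
      rw [← pow_add, show i + j = s + (i + j - s) by omega, pow_add, hR, zero_mul]
    refine Finset.sum_eq_zero fun k _ => Finset.sum_eq_zero fun c _ => ?_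
    have h1 : (p : R) ^ i ∣ stdGen p s t A ⟨⟨i, hi⟩, a⟩ ⟨k, c⟩ := by
      simp only [stdGen, Matrix.of_apply]
      split_ifs <;> simp
    have h2 : (p : R) ^ j ∣ parityHrec p s t A ⟨⟨j, hj⟩, b⟩ ⟨k, c⟩ := by
      simp only [parityHrec, Matrix.of_apply]
      split_ifs <;> simp
    exact zero_dvd_iff.mp (h0 ▸ mul_dvd_mul h1 h2)

theorem exists_eq_pow_mul {p s m : ℕ} (hp : p.Prime) (hm : m ≤ s) (x : ZMod (p ^ s))
    (hx : (p : ZMod (p ^ s)) ^ m * x = 0) : ∃ w, x = (p : ZMod (p ^ s)) ^ (s - m) * w := by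
  have : NeZero (p ^ s) := ⟨pow_ne_zero _ hp.ne_zero⟩
  have h : ((p ^ m * x.val : ℕ) : ZMod (p ^ s)) = 0 := by
    push_cast
    rwa [ZMod.natCast_zmod_val]
  rw [ZMod.natCast_eq_zero_iff] at h
  have hs : p ^ m * p ^ (s - m) = p ^ s := by rw [← pow_add, Nat.add_sub_cancel' hm]
  obtain ⟨w, hw⟩ := Nat.dvd_of_mul_dvd_mul_left (pow_pos hp.pos m) (hs.dvd.trans h)
  refine ⟨w, ?_⟩
  rw [← ZMod.natCast_zmod_val x, hw]
  push_cast
  rfl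

/-- Back-substitution: a vector orthogonal to the rows of `G` whose (zero-based) blocks from the
`m`-th on vanish is a combination of rows of `H`, by induction on `m`. -/
theorem mem_span_of_dual (p : ℕ) (hp : p.Prime) (s : ℕ) (t : ℕ → ℕ)
    (A : (a b : ℕ) → Matrix (Fin (t a)) (Fin (t b)) (ZMod (p ^ s))) (m : ℕ) (hm : m ≤ s + 1)
    (v : ((k : Fin (s + 1)) × Fin (t ((k : ℕ) + 1))) → ZMod (p ^ s))
    (hv : ∀ x, ∑ y, stdGen p s t A x y * v y = 0)
    (hz : ∀ y, m ≤ (y.1 : ℕ) → v y = 0) :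
    v ∈ Submodule.span (ZMod (p ^ s)) (Set.range (fun x => parityHrec p s t A x)) := by
  have hR : (p : ZMod (p ^ s)) ^ s = 0 := by exact_mod_cast ZMod.natCast_self (p ^ s)
  induction m generalizing v with
  | zero =>
    rw [show v = 0 from funext fun y => hz y (Nat.zero_le _)]
    exact Submodule.zero_mem _
  | succ m ih =>
    have hms : m < s + 1 := hm
    have hdiv : ∀ c : Fin (t (m + 1)), ∃ w,
        v ⟨⟨m, hms⟩, c⟩ = (p : ZMod (p ^ s)) ^ (s - m) * w := by
      intro c
      by_cases h : m < s
      · refine exists_eq_pow_mul hp h.le _ ?_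
        rw [← hv ⟨⟨m, h⟩, c⟩, Finset.sum_eq_single ⟨⟨m, hms⟩, c⟩]
        · simp [stdGen]
        · rintro ⟨⟨k, hk⟩, d⟩ - hne
          rcases lt_trichotomy m k with h' | h' | h'
          · rw [hz ⟨⟨k, hk⟩, d⟩ h', mul_zero]
          · subst h'
            have : (c : ℕ) ≠ d := fun e => hne (by rw [Fin.ext e])
            simp [stdGen, this]
          · simp [stdGen, h'.ne', h'.le.not_gt]
        · simp
      · exact ⟨v ⟨⟨m, hms⟩, c⟩, by simp [show s - m = 0 by omega]⟩
    choose w hw using hdiv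
    rcases Nat.eq_zero_or_pos m with rfl | hm0
    · -- `H` has no block row ending at the first block, but there the divisor is `p^s = 0`.
      refine ih (by omega) v hv ?_
      rintro ⟨⟨k, hk⟩, c⟩ -
      rcases Nat.eq_zero_or_pos k with rfl | hk0
      · have := hw c
        rw [this, Nat.sub_zero, hR, zero_mul]
      · exact hz _ hk0
    · have hjs : s - m < s := by omega
      have hidx : s + 2 - (s - m + 1) = m + 1 := by omega
      set u : ((k : Fin (s + 1)) × Fin (t ((k : ℕ) + 1))) → ZMod (p ^ s) :=
        ∑ b : Fin (t (s + 2 - (s - m + 1))), w (Fin.cast (congrArg t hidx) b) •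
          parityHrec p s t A ⟨⟨s - m, hjs⟩, b⟩ with hu
      have hmem : u ∈ Submodule.span (ZMod (p ^ s))
          (Set.range (fun x => parityHrec p s t A x)) :=
        Submodule.sum_mem _ fun b _ => Submodule.smul_mem _ _ (Submodule.subset_span ⟨_, rfl⟩)
      have huv : v - u ∈ Submodule.span (ZMod (p ^ s))
          (Set.range (fun x => parityHrec p s t A x)) := by
        refine ih (by omega) _ ?_ ?_
        · intro x
          have hux : ∑ y, stdGen p s t A x y * u y = 0 := by
            simp only [hu, Finset.sum_apply, Pi.smul_apply, smul_eq_mul, Finset.mul_sum]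
            rw [Finset.sum_comm]
            refine Finset.sum_eq_zero fun b _ => ?_
            simp only [mul_left_comm _ (w _), ← Finset.mul_sum]
            rw [gen_dot_parity p s t hR, mul_zero]
          simp only [Pi.sub_apply, mul_sub, Finset.sum_sub_distrib, hv x, hux, sub_zero]
        · rintro ⟨⟨k, hk⟩, c⟩ hmk
          simp only at hmk c
          simp only [Pi.sub_apply, hu, Finset.sum_apply, Pi.smul_apply, smul_eq_mul, parityHrec,
            Matrix.of_apply, if_neg (show ¬ k + 1 + (s - m + 1) ≤ s + 1 by omega)]
          rcases hmk.eq_or_lt with rfl | hlt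
          · simp only [if_pos hidx.symm]
            rw [hw c, sub_eq_zero, Fintype.sum_eq_single (Fin.cast (congrArg t hidx.symm) c)]
            · simp [mul_comm]
            · intro b hb
              rw [if_neg (fun e : (b : ℕ) = c => hb (Fin.ext e)), mul_zero]
          · simp only [if_neg (show ¬ k + 1 = s + 2 - (s - m + 1) by omega)]
            rw [hz ⟨⟨k, hk⟩, c⟩ hlt]
            simp
      simpa using Submodule.add_mem _ huv hmem

/-- Let `p` be prime, `s ≥ 1`, `t_1, …, t_s, n ≥ 0` with
`t = t_1 + ⋯ + t_s ≤ n` and `t_{s+1} = n - t`, and let `A_{i,j}` be matrices over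
`ℤ_{p^s}`.  Let `C` be the `ℤ_{p^s}`-additive code of length `n` generated by the rows of
the generator matrix `G` in standard form.  Then the matrix `H` built from the recursively
defined blocks `H_{i,j}` is a parity-check matrix of `C`: the span of the rows of `H`
equals the dual code `C^⊥ = {v : u·v = 0 for all u ∈ C}`. -/
theorem stmt12 (p : ℕ) (hp : p.Prime) (s : ℕ) (hs : 1 ≤ s) (n : ℕ) (t : ℕ → ℕ)
    (htn : ∑ i ∈ Finset.Icc 1 s, t i ≤ n)
    (hlast : t (s + 1) = n - ∑ i ∈ Finset.Icc 1 s, t i)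
    (A : (a b : ℕ) → Matrix (Fin (t a)) (Fin (t b)) (ZMod (p ^ s))) :
    (Submodule.span (ZMod (p ^ s))
        (Set.range (fun x => parityHrec p s t A x)) :
        Set (((k : Fin (s + 1)) × Fin (t ((k : ℕ) + 1))) → ZMod (p ^ s)))
      = {v | ∀ u ∈ Submodule.span (ZMod (p ^ s))
              (Set.range (fun x => stdGen p s t A x)),
            ∑ y, u y * v y = 0} := by
  have hR : (p : ZMod (p ^ s)) ^ s = 0 := by exact_mod_cast ZMod.natCast_self (p ^ s)
  ext v
  simp only [SetLike.mem_coe, Set.mem_ofPred_eq]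
  constructor
  · intro hv u hu
    induction hu using Submodule.span_induction with
    | mem u hu =>
      obtain ⟨x, rfl⟩ := hu
      induction hv using Submodule.span_induction with
      | mem v hv =>
        obtain ⟨z, rfl⟩ := hv
        exact gen_dot_parity p s t hR A x z
      | zero => simp
      | add v v' _ _ h h' =>
        simp only [Pi.add_apply, mul_add, Finset.sum_add_distrib, h, h', add_zero]
      | smul r v _ h =>
        simp only [Pi.smul_apply, smul_eq_mul, mul_left_comm _ r, ← Finset.mul_sum, h, mul_zero]
    | zero => simp
    | add u u' _ _ h h' =>
      simp only [Pi.add_apply, add_mul, Finset.sum_add_distrib, h, h', add_zero]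
    | smul r u _ h =>
      simp only [Pi.smul_apply, smul_eq_mul, mul_assoc, ← Finset.mul_sum, h, mul_zero]
  · intro hv
    refine mem_span_of_dual p hp s t A (s + 1) le_rfl v
      (fun x => hv _ (Submodule.subset_span ⟨x, rfl⟩)) fun y hy => ?_
    exact absurd y.1.isLt (by omega)
end

section
/- Let n, t_1, t_2, t_3 be nonnegative integers with t = t_1 + t_2 + t_3 ≤ n, and let A_{1,2} (t_1 × t_2), A_{1,3} (t_1 × t_3), A_{2,3} (t_2 × t_3), A_{1,4} (t_1 × (n-t)), A_{2,4} (t_2 × (n-t)), A_{3,4} (t_3 × (n-t)) be matrices over ℤ_8. Let C ⊆ ℤ_8^n be the ℤ_8-additive code generated by the rows of the block matrix G = [[Id_{t_1}, A_{1,2}, A_{1,3}, A_{1,4}], [0, 2Id_{t_2}, 2A_{2,3}, 2A_{2,4}], [0, 0, 4Id_{t_3}, 4A_{3,4}]]. Then the matrix H whose transpose is H^T = [[-(A_{1,2}A_{2,3}A_{3,4} + A_{1,4} - A_{1,2}A_{2,4} - A_{1,3}A_{3,4}), 2(A_{1,2}A_{2,3} - A_{1,3}), -4A_{1,2}], [A_{2,3}A_{3,4}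 - A_{2,4}, -2A_{2,3}, 4Id_{t_2}], [-A_{3,4}, 2Id_{t_3}, 0], [Id_{n-t}, 0, 0]] is a parity-check matrix of C; that is, the rows of H generate the dual code C^⊥. -/
/-!
Write `v = (v₁, v₂, v₃, v₄)` along the column blocks.  Then `v ∈ C^⊥` means `G v = 0`, i.e.
* `v₁ + A12 v₂ + A13 v₃ + A14 v₄ = 0`,
* `2 (v₂ + A23 v₃ + A24 v₄) = 0`,
* `4 (v₃ + A34 v₄) = 0`.

In `ℤ_8` the annihilator of `4` is `2ℤ_8` and the annihilator of `2` is `4ℤ_8`, so the last two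
equations say `v₃ = -A34 v₄ + 2b` and `v₂ = -A23 v₃ - A24 v₄ + 4c` for some vectors `b`, `c`, and
the first one determines `v₁`.  Substituting backwards, `v` is the combination of the rows of `H`
with coefficients `(v₄, b, c)`.  The two systems are `genZ8_mulVec_eq_zero_iff` and
`vecMul_parZ8_eq_iff`.
-/

/-- The generator matrix
`G = [[Id_{t1}, A12, A13, A14], [0, 2·Id_{t2}, 2·A23, 2·A24], [0, 0, 4·Id_{t3}, 4·A34]]`
over `ℤ_8`, with columns indexed by the `n`-element type
`Fin t1 ⊕ Fin t2 ⊕ Fin t3 ⊕ Fin (n - (t1+t2+t3))`. -/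
def genZ8 (n t1 t2 t3 : ℕ)
    (A12 : Matrix (Fin t1) (Fin t2) (ZMod 8))
    (A13 : Matrix (Fin t1) (Fin t3) (ZMod 8))
    (A23 : Matrix (Fin t2) (Fin t3) (ZMod 8))
    (A14 : Matrix (Fin t1) (Fin (n - (t1 + t2 + t3))) (ZMod 8))
    (A24 : Matrix (Fin t2) (Fin (n - (t1 + t2 + t3))) (ZMod 8))
    (A34 : Matrix (Fin t3) (Fin (n - (t1 + t2 + t3))) (ZMod 8)) :
    Matrix (Fin t1 ⊕ Fin t2 ⊕ Fin t3)
      (Fin t1 ⊕ Fin t2 ⊕ Fin t3 ⊕ Fin (n - (t1 + t2 + t3))) (ZMod 8) :=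
  Matrix.of fun x y =>
    match x, y with
    | Sum.inl r, Sum.inl c => if r = c then 1 else 0
    | Sum.inl r, Sum.inr (Sum.inl c) => A12 r c
    | Sum.inl r, Sum.inr (Sum.inr (Sum.inl c)) => A13 r c
    | Sum.inl r, Sum.inr (Sum.inr (Sum.inr c)) => A14 r c
    | Sum.inr (Sum.inl _), Sum.inl _ => 0
    | Sum.inr (Sum.inl r), Sum.inr (Sum.inl c) => if r = c then 2 else 0
    | Sum.inr (Sum.inl r), Sum.inr (Sum.inr (Sum.inl c)) => 2 * A23 r c
    | Sum.inr (Sum.inl r), Sum.inr (Sum.inr (Sum.inr c)) => 2 * A24 r c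
    | Sum.inr (Sum.inr _), Sum.inl _ => 0
    | Sum.inr (Sum.inr _), Sum.inr (Sum.inl _) => 0
    | Sum.inr (Sum.inr r), Sum.inr (Sum.inr (Sum.inl c)) => if r = c then 4 else 0
    | Sum.inr (Sum.inr r), Sum.inr (Sum.inr (Sum.inr c)) => 4 * A34 r c

/-- The matrix `H` whose transpose is
`Hᵀ = [[-(A12·A23·A34 + A14 - A12·A24 - A13·A34), 2(A12·A23 - A13), -4·A12],
       [A23·A34 - A24, -2·A23, 4·Id_{t2}],
       [-A34, 2·Id_{t3}, 0],
       [Id_{n-t}, 0, 0]]`. -/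
def parZ8 (n t1 t2 t3 : ℕ)
    (A12 : Matrix (Fin t1) (Fin t2) (ZMod 8))
    (A13 : Matrix (Fin t1) (Fin t3) (ZMod 8))
    (A23 : Matrix (Fin t2) (Fin t3) (ZMod 8))
    (A14 : Matrix (Fin t1) (Fin (n - (t1 + t2 + t3))) (ZMod 8))
    (A24 : Matrix (Fin t2) (Fin (n - (t1 + t2 + t3))) (ZMod 8))
    (A34 : Matrix (Fin t3) (Fin (n - (t1 + t2 + t3))) (ZMod 8)) :
    Matrix (Fin (n - (t1 + t2 + t3)) ⊕ Fin t3 ⊕ Fin t2)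
      (Fin t1 ⊕ Fin t2 ⊕ Fin t3 ⊕ Fin (n - (t1 + t2 + t3))) (ZMod 8) :=
  Matrix.of fun x y =>
    match x, y with
    | Sum.inl r, Sum.inl c => (-(A12 * A23 * A34 + A14 - A12 * A24 - A13 * A34)) c r
    | Sum.inl r, Sum.inr (Sum.inl c) => (A23 * A34 - A24) c r
    | Sum.inl r, Sum.inr (Sum.inr (Sum.inl c)) => -A34 c r
    | Sum.inl r, Sum.inr (Sum.inr (Sum.inr c)) => if r = c then 1 else 0
    | Sum.inr (Sum.inl r), Sum.inl c => 2 * (A12 * A23 - A13) c r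
    | Sum.inr (Sum.inl r), Sum.inr (Sum.inl c) => -(2 * A23 c r)
    | Sum.inr (Sum.inl r), Sum.inr (Sum.inr (Sum.inl c)) => if r = c then 2 else 0
    | Sum.inr (Sum.inl _), Sum.inr (Sum.inr (Sum.inr _)) => 0
    | Sum.inr (Sum.inr r), Sum.inl c => -(4 * A12 c r)
    | Sum.inr (Sum.inr r), Sum.inr (Sum.inl c) => if r = c then 4 else 0
    | Sum.inr (Sum.inr _), Sum.inr (Sum.inr (Sum.inl _)) => 0
    | Sum.inr (Sum.inr _), Sum.inr (Sum.inr (Sum.inr _)) => 0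

open Matrix in
/-- The equations defining `C^⊥`, block by block. -/
lemma genZ8_mulVec_eq_zero_iff (n t1 t2 t3 : ℕ)
    (A12 : Matrix (Fin t1) (Fin t2) (ZMod 8))
    (A13 : Matrix (Fin t1) (Fin t3) (ZMod 8))
    (A23 : Matrix (Fin t2) (Fin t3) (ZMod 8))
    (A14 : Matrix (Fin t1) (Fin (n - (t1 + t2 + t3))) (ZMod 8))
    (A24 : Matrix (Fin t2) (Fin (n - (t1 + t2 + t3))) (ZMod 8))
    (A34 : Matrix (Fin t3) (Fin (n - (t1 + t2 + t3))) (ZMod 8))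
    (v1 : Fin t1 → ZMod 8) (v2 : Fin t2 → ZMod 8) (v3 : Fin t3 → ZMod 8)
    (v4 : Fin (n - (t1 + t2 + t3)) → ZMod 8) :
    genZ8 n t1 t2 t3 A12 A13 A23 A14 A24 A34 *ᵥ Sum.elim v1 (Sum.elim v2 (Sum.elim v3 v4)) = 0 ↔
      v1 + A12 *ᵥ v2 + A13 *ᵥ v3 + A14 *ᵥ v4 = 0 ∧
      (2 : ZMod 8) • (v2 + A23 *ᵥ v3 + A24 *ᵥ v4) = 0 ∧
      (4 : ZMod 8) • (v3 + A34 *ᵥ v4) = 0 := by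
  simp only [funext_iff, Sum.forall, mulVec, dotProduct, Fintype.sum_sum_type, genZ8, of_apply,
    Sum.elim_inl, Sum.elim_inr, Pi.add_apply, Pi.smul_apply, Pi.zero_apply, smul_eq_mul, ite_mul,
    zero_mul, one_mul, Finset.sum_ite_eq, Finset.mem_univ, if_true, Finset.sum_const_zero, zero_add,
    mul_add, Finset.mul_sum, mul_assoc, add_assoc]

open Matrix in
/-- The combination of the rows of `H` with coefficients `(a, b, c)`, block by block. -/
lemma vecMul_parZ8_eq_iff (n t1 t2 t3 : ℕ)
    (A12 : Matrix (Fin t1) (Fin t2) (ZMod 8))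
    (A13 : Matrix (Fin t1) (Fin t3) (ZMod 8))
    (A23 : Matrix (Fin t2) (Fin t3) (ZMod 8))
    (A14 : Matrix (Fin t1) (Fin (n - (t1 + t2 + t3))) (ZMod 8))
    (A24 : Matrix (Fin t2) (Fin (n - (t1 + t2 + t3))) (ZMod 8))
    (A34 : Matrix (Fin t3) (Fin (n - (t1 + t2 + t3))) (ZMod 8))
    (a : Fin (n - (t1 + t2 + t3)) → ZMod 8) (b : Fin t3 → ZMod 8) (c : Fin t2 → ZMod 8)
    (v1 : Fin t1 → ZMod 8) (v2 : Fin t2 → ZMod 8) (v3 : Fin t3 → ZMod 8)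
    (v4 : Fin (n - (t1 + t2 + t3)) → ZMod 8) :
    Sum.elim a (Sum.elim b c) ᵥ* parZ8 n t1 t2 t3 A12 A13 A23 A14 A24 A34 =
        Sum.elim v1 (Sum.elim v2 (Sum.elim v3 v4)) ↔
      (-(A12 * A23 * A34 + A14 - A12 * A24 - A13 * A34)) *ᵥ a +
        ((2 : ZMod 8) • ((A12 * A23 - A13) *ᵥ b) + -((4 : ZMod 8) • (A12 *ᵥ c))) = v1 ∧
      (A23 * A34 - A24) *ᵥ a + (-((2 : ZMod 8) • (A23 *ᵥ b)) + (4 : ZMod 8) • c) = v2 ∧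
      -(A34 *ᵥ a) + (2 : ZMod 8) • b = v3 ∧ a = v4 := by
  -- Abstracting the composite blocks keeps `simp` from expanding the matrix products.
  generalize hM : -(A12 * A23 * A34 + A14 - A12 * A24 - A13 * A34) = M
  generalize hN : A23 * A34 - A24 = N
  generalize hP : A12 * A23 - A13 = P
  simp only [funext_iff, Sum.forall, vecMul, mulVec, dotProduct, Fintype.sum_sum_type, parZ8, hM,
    hN, hP, of_apply, Sum.elim_inl, Sum.elim_inr, Pi.add_apply, Pi.smul_apply, Pi.neg_apply,
    smul_eq_mul, mul_ite, mul_zero, mul_one, Finset.sum_ite_eq', Finset.mem_univ, if_true,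
    Finset.sum_const_zero, add_zero, Finset.mul_sum, mul_neg, Finset.sum_neg_distrib, mul_comm,
    mul_left_comm, mul_assoc]

lemma exists_two_smul_of_four_smul_eq_zero {ι : Type*} (x : ι → ZMod 8)
    (hx : (4 : ZMod 8) • x = 0) : ∃ b : ι → ZMod 8, x = (2 : ZMod 8) • b := by
  have key : ∀ z : ZMod 8, 4 * z = 0 → ∃ b, z = 2 * b := by decide
  choose b hb using fun i => key (x i) (congrFun hx i)
  exact ⟨b, funext hb⟩

lemma exists_four_smul_of_two_smul_eq_zero {ι : Type*} (x : ι → ZMod 8)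
    (hx : (2 : ZMod 8) • x = 0) : ∃ c : ι → ZMod 8, x = (4 : ZMod 8) • c := by
  have key : ∀ z : ZMod 8, 2 * z = 0 → ∃ c, z = 4 * c := by decide
  choose c hc using fun i => key (x i) (congrFun hx i)
  exact ⟨c, funext hc⟩

open Matrix in
lemma mem_dual_span_rows_iff {m k : Type*} [Fintype k] (G : Matrix m k (ZMod 8))
    (v : k → ZMod 8) :
    (∀ u ∈ Submodule.span (ZMod 8) (Set.range fun x => G x), ∑ y, u y * v y = 0) ↔
      G *ᵥ v = 0 := by
  constructor
  · intro hv
    funext x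
    exact hv _ (Submodule.subset_span ⟨x, rfl⟩)
  · intro hv u hu
    change u ⬝ᵥ v = 0
    induction hu using Submodule.span_induction with
    | mem u hu =>
      obtain ⟨x, rfl⟩ := hu
      exact congrFun hv x
    | zero => exact zero_dotProduct v
    | add u w _ _ hu hw => rw [add_dotProduct, hu, hw, add_zero]
    | smul r u _ hu => rw [smul_dotProduct, hu, smul_zero]

open Matrix in
lemma mem_span_rows_iff {m k : Type*} [Fintype m] (H : Matrix m k (ZMod 8))
    (v : k → ZMod 8) :
    v ∈ Submodule.span (ZMod 8) (Set.range fun x => H x) ↔ ∃ w, w ᵥ* H = v := by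
  have hr := congrArg (v ∈ ·) (_root_.range_vecMulLinear H)
  simp only [LinearMap.mem_range, vecMulLinear_apply] at hr
  exact (iff_of_eq hr).symm

/-- With `t = t1 + t2 + t3 ≤ n` and matrices `A12, A13, A23, A14, A24, A34`
over `ℤ_8` as above, let `C ⊆ ℤ_8^n` be the `ℤ_8`-additive code generated by the rows of
`G` (the ambient space being indexed by the `n`-element column type).  Then `H` is a
parity-check matrix of `C`: the span of the rows of `H` equals the dual
`C^⊥ = {v : u·v = 0 for all u ∈ C}`. -/
theorem stmt15 (n t1 t2 t3 : ℕ) (h : t1 + t2 + t3 ≤ n)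
    (A12 : Matrix (Fin t1) (Fin t2) (ZMod 8))
    (A13 : Matrix (Fin t1) (Fin t3) (ZMod 8))
    (A23 : Matrix (Fin t2) (Fin t3) (ZMod 8))
    (A14 : Matrix (Fin t1) (Fin (n - (t1 + t2 + t3))) (ZMod 8))
    (A24 : Matrix (Fin t2) (Fin (n - (t1 + t2 + t3))) (ZMod 8))
    (A34 : Matrix (Fin t3) (Fin (n - (t1 + t2 + t3))) (ZMod 8)) :
    (Submodule.span (ZMod 8)
        (Set.range (fun x => parZ8 n t1 t2 t3 A12 A13 A23 A14 A24 A34 x)) :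
        Set ((Fin t1 ⊕ Fin t2 ⊕ Fin t3 ⊕ Fin (n - (t1 + t2 + t3))) → ZMod 8))
      = {v | ∀ u ∈ Submodule.span (ZMod 8)
              (Set.range (fun x => genZ8 n t1 t2 t3 A12 A13 A23 A14 A24 A34 x)),
            ∑ y, u y * v y = 0} := by
  ext v
  obtain ⟨v1, v2, v3, v4, rfl⟩ :
      ∃ v1 v2 v3 v4, v = Sum.elim v1 (Sum.elim v2 (Sum.elim v3 v4)) := by
    refine ⟨fun i => v (.inl i), fun i => v (.inr (.inl i)), fun i => v (.inr (.inr (.inl i))),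
      fun i => v (.inr (.inr (.inr i))), ?_⟩
    ext (i | i | i | i) <;> rfl
  rw [SetLike.mem_coe, mem_span_rows_iff, Set.mem_ofPred_eq, mem_dual_span_rows_iff,
    genZ8_mulVec_eq_zero_iff]
  have h8 : (8 : ZMod 8) = 0 := by decide
  constructor
  · rintro ⟨w, hw⟩
    obtain ⟨a, b, c, rfl⟩ : ∃ a b c, w = Sum.elim a (Sum.elim b c) := by
      refine ⟨fun i => w (.inl i), fun i => w (.inr (.inl i)), fun i => w (.inr (.inr i)), ?_⟩
      ext (i | i | i) <;> rfl
    obtain ⟨rfl, rfl, rfl, rfl⟩ := (vecMul_parZ8_eq_iff ..).1 hw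
    simp only [Matrix.add_mulVec, Matrix.sub_mulVec, Matrix.neg_mulVec, Matrix.mulVec_add,
      Matrix.mulVec_sub, Matrix.mulVec_neg, Matrix.mulVec_smul, ← Matrix.mulVec_mulVec]
    refine ⟨by module, ?_, ?_⟩
    · trans (8 : ZMod 8) • c
      · module
      · rw [h8, zero_smul]
    · trans (8 : ZMod 8) • b
      · module
      · rw [h8, zero_smul]
  · rintro ⟨e1, e2, e3⟩
    obtain ⟨b, hb⟩ := exists_two_smul_of_four_smul_eq_zero _ e3
    obtain ⟨c, hc⟩ := exists_four_smul_of_two_smul_eq_zero _ e2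
    refine ⟨Sum.elim v4 (Sum.elim b c), (vecMul_parZ8_eq_iff ..).2 ?_⟩
    -- Back substitution: `v3`, then `v2`, then `v1`.
    obtain rfl : v3 = (2 : ZMod 8) • b - A34.mulVec v4 := eq_sub_of_add_eq hb
    obtain rfl : v2 = (4 : ZMod 8) • c - A24.mulVec v4
        - A23.mulVec ((2 : ZMod 8) • b - A34.mulVec v4) := by
      rw [← hc]; abel
    rw [add_assoc, add_assoc, add_eq_zero_iff_eq_neg] at e1
    subst e1
    simp only [Matrix.add_mulVec, Matrix.sub_mulVec, Matrix.neg_mulVec,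
      Matrix.mulVec_sub, Matrix.mulVec_smul, ← Matrix.mulVec_mulVec]
    refine ⟨by module, by module, by module, trivial⟩
end
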